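/- There exists a constant M > 0, depending only on A and C₀, such that for every t ≥ 0 one has β ∫₀ᵗ ∫_ℝ |∂ₓu(s,x)| · |∂ₓ²u(s,x)| dx ds ≤ M ε². -/

import Mathlib

open MeasureTheory

/-!
Write `E = ‖u‖² + β ‖∂ₓu‖²` and `F = A² ‖u‖₄⁴ + ε² ‖∂ₓu‖²`. For this choice of `B` and `C` the
dispersion conserves `E`, so `-E' = 2 ε (‖∂ₓu‖² + β ‖∂ₓ²u‖²)`. In `F'` the viscosity yields
`-2 ε³ ‖∂ₓ²u‖²`, and by Agmon's inequality `‖u‖_∞⁴ ≤ ‖u‖² ‖∂ₓu‖²` and `β ≤ ε⁴ / (√C₀ A²)` the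
other terms cost at most part of the viscous dissipation plus
`(c₁ + c₂ ε² ‖∂ₓu‖²) β ε ‖∂ₓ²u‖² ≤ (c₁ + c₂ F) (-E')`. The weight `exp (c₂ E)` absorbs the product
`F E'`, so `exp (c₂ E) (F + c₁ E)` decreases at a rate controlling
`ε ‖∂ₓu‖² + ε³ ‖∂ₓ²u‖² ≥ 2 ε² ‖∂ₓu ∂ₓ²u‖_{L¹}` uniformly in time; a last use of the bound on `β`
turns this into the theorem.
-/

open Set Filter Topology Function

section Agmon

theorem sq_integral_norm_mul_norm_le {α E : Type*} [MeasurableSpace α] {μ : Measure α}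
    [NormedAddCommGroup E] {f g : α → E} (hf : MemLp f 2 μ) (hg : MemLp g 2 μ) :
    (∫ x, ‖f x‖ * ‖g x‖ ∂μ) ^ 2 ≤ (∫ x, ‖f x‖ ^ 2 ∂μ) * ∫ x, ‖g x‖ ^ 2 ∂μ := by
  have holder := integral_mul_norm_le_Lp_mul_Lq (μ := μ) (f := f) (g := g)
    Real.HolderConjugate.two_two (by simpa using hf) (by simpa using hg)
  simp only [Real.rpow_two, ← Real.sqrt_eq_rpow] at holder
  rw [← Real.sqrt_mul (by positivity)] at holder
  exact (Real.le_sqrt (by positivity) (by positivity)).1 holder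

theorem two_mul_norm_le_integral_norm_deriv {E : Type*} [NormedAddCommGroup E] [NormedSpace ℝ E]
    [CompleteSpace E] {f : ℝ → E} (hf : ContDiff ℝ 1 f) (hsupp : HasCompactSupport f) (x : ℝ) :
    2 * ‖f x‖ ≤ ∫ y, ‖deriv f y‖ := by
  have hint : Integrable fun y ↦ ‖deriv f y‖ :=
    (hf.continuous_deriv_one.integrable_of_hasCompactSupport hsupp.deriv).norm
  have left : ‖f x‖ ≤ ∫ y in Iic x, ‖deriv f y‖ := by
    rw [← hsupp.integral_Iic_deriv_eq hf x]
    exact norm_integral_le_integral_norm _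
  have right : ‖f x‖ ≤ ∫ y in Ioi x, ‖deriv f y‖ := by
    rw [← norm_neg, ← hsupp.integral_Ioi_deriv_eq hf x]
    exact norm_integral_le_integral_norm _
  rw [← intervalIntegral.integral_Iic_add_Ioi (b := x) hint.integrableOn hint.integrableOn]
  linarith

theorem pow_four_le_integral_sq_mul_integral_deriv_sq {f : ℝ → ℝ} (hf : ContDiff ℝ 1 f)
    (hsupp : HasCompactSupport f) (x : ℝ) :
    f x ^ 4 ≤ (∫ y, f y ^ 2) * ∫ y, deriv f y ^ 2 := by
  have sq_le : f x ^ 2 ≤ ∫ y, ‖f y‖ * ‖deriv f y‖ := by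
    have h := two_mul_norm_le_integral_norm_deriv (hf.pow 2)
      (hsupp.comp_left (g := (· ^ 2)) (zero_pow two_ne_zero)) x
    have hderiv (y : ℝ) : ‖deriv (fun z ↦ f z ^ 2) y‖ = 2 * (‖f y‖ * ‖deriv f y‖) := by
      rw [((hf.differentiable one_ne_zero y).hasDerivAt.fun_pow 2).deriv]
      simp [mul_assoc]
    simp only [hderiv, integral_const_mul, norm_pow, Real.norm_eq_abs, sq_abs] at h ⊢
    linarith
  have cauchy_schwarz := sq_integral_norm_mul_norm_le
    (hf.continuous.memLp_of_hasCompactSupport hsupp (μ := volume))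
    (hf.continuous_deriv_one.memLp_of_hasCompactSupport hsupp.deriv)
  calc f x ^ 4 = (f x ^ 2) ^ 2 := by ring
    _ ≤ (∫ y, ‖f y‖ * ‖deriv f y‖) ^ 2 := by gcongr
    _ ≤ (∫ y, f y ^ 2) * ∫ y, deriv f y ^ 2 := by simpa using cauchy_schwarz

end Agmon

section Parametric

theorem hasDerivAt_integral_of_support_subset_compact {X E : Type*} [TopologicalSpace X]
    [T2Space X] [SecondCountableTopology X] [MeasurableSpace X] [BorelSpace X]
    {μ : Measure X} [IsFiniteMeasureOnCompacts μ]
    [NormedAddCommGroup E] [NormedSpace ℝ E] {F F' : ℝ → X → E} {K : Set X} (hK : IsCompact K)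
    (hF : ∀ t, Continuous (F t)) (hF' : Continuous (uncurry F'))
    (hsupp : ∀ t, ∀ x ∉ K, F t x = 0) (hderiv : ∀ t x, HasDerivAt (F · x) (F' t x) t) (t : ℝ) :
    HasDerivAt (fun τ ↦ ∫ x, F τ x ∂μ) (∫ x, F' t x ∂μ) t := by
  obtain ⟨C, hC⟩ := ((isCompact_closedBall t 1).prod hK).exists_bound_of_continuousOn
    hF'.continuousOn
  have hsupp' (τ : ℝ) (x : X) (hx : x ∉ K) : F' τ x = 0 := by
    rw [← (hderiv τ x).deriv, show (F · x) = fun _ ↦ 0 from funext (hsupp · x hx), deriv_const]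
  have bound (x : X) (τ : ℝ) (hτ : τ ∈ Metric.closedBall t 1) :
      ‖F' τ x‖ ≤ K.indicator (fun _ ↦ C) x := by
    by_cases hx : x ∈ K
    · simpa [hx] using hC (τ, x) ⟨hτ, hx⟩
    · simp [hx, hsupp' τ x hx]
  refine (hasDerivAt_integral_of_dominated_loc_of_deriv_le (bound := K.indicator fun _ ↦ C)
    (Metric.closedBall_mem_nhds t one_pos) (.of_forall fun τ ↦ (hF τ).aestronglyMeasurable)
    ((hF t).integrable_of_hasCompactSupport (.intro hK (hsupp t)))
    (hF'.uncurry_left t).aestronglyMeasurable (.of_forall bound) ?_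
    (.of_forall fun x τ _ ↦ hderiv τ x)).2
  exact (integrable_indicator_iff hK.measurableSet).2
    (integrableOn_const hK.measure_lt_top.ne)

theorem deriv_eq_zero_of_notMem_of_isClosed {E : Type*} [NormedAddCommGroup E] [NormedSpace ℝ E]
    {f : ℝ → E} {K : Set ℝ} (hK : IsClosed K) (hf : ∀ x ∉ K, f x = 0) {x : ℝ} (hx : x ∉ K) :
    deriv f x = 0 := by
  have : f =ᶠ[𝓝 x] fun _ ↦ 0 := by
    filter_upwards [hK.isOpen_compl.mem_nhds hx] with y hy using hf y hy
  rw [this.deriv_eq, deriv_const]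

variable {E : Type*} [NormedAddCommGroup E] [NormedSpace ℝ E] {u : ℝ → ℝ → E}

theorem hasDerivAt_curry_left {t x : ℝ} (hu : DifferentiableAt ℝ (uncurry u) (t, x)) :
    HasDerivAt (u · x) (fderiv ℝ (uncurry u) (t, x) (1, 0)) t :=
  hu.hasFDerivAt.comp_hasDerivAt (f := (·, x)) t ((hasDerivAt_id t).prodMk (hasDerivAt_const t x))

theorem hasDerivAt_curry_right {t x : ℝ} (hu : DifferentiableAt ℝ (uncurry u) (t, x)) :
    HasDerivAt (u t) (fderiv ℝ (uncurry u) (t, x) (0, 1)) x :=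
  hu.hasFDerivAt.comp_hasDerivAt x ((hasDerivAt_const x t).prodMk (hasDerivAt_id x))

theorem uncurry_deriv_left (hu : Differentiable ℝ (uncurry u)) :
    (uncurry fun t x ↦ deriv (u · x) t) = fun p ↦ fderiv ℝ (uncurry u) p (1, 0) :=
  funext fun p ↦ (hasDerivAt_curry_left (hu p)).deriv

theorem uncurry_deriv_right (hu : Differentiable ℝ (uncurry u)) :
    (uncurry fun t ↦ deriv (u t)) = fun p ↦ fderiv ℝ (uncurry u) p (0, 1) :=
  funext fun p ↦ (hasDerivAt_curry_right (hu p)).deriv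

theorem contDiff_uncurry_deriv_left {m n : WithTop ℕ∞} (hu : ContDiff ℝ n (uncurry u))
    (hmn : m + 1 ≤ n) : ContDiff ℝ m (uncurry fun t x ↦ deriv (u · x) t) := by
  rw [uncurry_deriv_left ((hu.of_le (le_add_self.trans hmn)).differentiable one_ne_zero)]
  exact (hu.fderiv_right hmn).clm_apply contDiff_const

theorem contDiff_uncurry_deriv_right {m n : WithTop ℕ∞} (hu : ContDiff ℝ n (uncurry u))
    (hmn : m + 1 ≤ n) : ContDiff ℝ m (uncurry fun t ↦ deriv (u t)) := by
  rw [uncurry_deriv_right ((hu.of_le (le_add_self.trans hmn)).differentiable one_ne_zero)]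
  exact (hu.fderiv_right hmn).clm_apply contDiff_const

theorem deriv_deriv_comm (hu : ContDiff ℝ 2 (uncurry u)) (t x : ℝ) :
    deriv (fun τ ↦ deriv (u τ) x) t = deriv (fun y ↦ deriv (u · y) t) x := by
  have hdiff : Differentiable ℝ (uncurry u) := hu.differentiable two_ne_zero
  have hdiff' : DifferentiableAt ℝ (fderiv ℝ (uncurry u)) (t, x) :=
    (hu.fderiv_right (m := 1) (by norm_num)).differentiable one_ne_zero _
  have hleft := (contDiff_uncurry_deriv_left (m := 1) hu (by norm_num)).differentiable one_ne_zero
  have hright := (contDiff_uncurry_deriv_right (m := 1) hu (by norm_num)).differentiable one_ne_zero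
  have hsymm : IsSymmSndFDerivAt ℝ (uncurry u) (t, x) :=
    hu.contDiffAt.isSymmSndFDerivAt (by simp)
  rw [(hasDerivAt_curry_left (hright (t, x))).deriv, (hasDerivAt_curry_right (hleft (t, x))).deriv,
    uncurry_deriv_left hdiff, uncurry_deriv_right hdiff,
    fderiv_clm_apply hdiff' (by fun_prop), fderiv_clm_apply hdiff' (by fun_prop)]
  simpa using hsymm (1, 0) (0, 1)

end Parametric

/-- The spatial part of the Kudryashov–Sinelshchikov equation for `B = 2A/3`, `C = -A/3`, `D = 0`,
moved to the right-hand side: the equation reads `∂ₜu = ksOperator A β ε u`. -/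
noncomputable def ksOperator (A β ε : ℝ) (f : ℝ → ℝ) (x : ℝ) : ℝ :=
  -A * f x * deriv f x - β * deriv (deriv (deriv f)) x
    + 2 * A / 3 * β * deriv (fun y ↦ f y * deriv (deriv f) y) x
    - A / 3 * β * deriv f x * deriv (deriv f) x + ε * deriv (deriv f) x

/-- The flux of the energy density `(f² + β f'²) / 2` as a function of `p = f`, `m = f'`,
`q = f''`; its sign makes its `x`-derivative the production minus the dissipation. -/
noncomputable def energyFlux (A β ε p m q : ℝ) : ℝ :=
  -A / 3 * p ^ 3 - β * p * q + β / 2 * m ^ 2 + ε * p * m + 2 * A / 3 * β * p ^ 2 * q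
    + β ^ 2 / 2 * q ^ 2 - A / 3 * β ^ 2 * p * q ^ 2

/-- The flux of the density `A² f⁴ + ε² f'²`, as a function of `p = f`, `m = f'`, `q = f''`. -/
noncomputable def quarticFlux (A β ε p m q : ℝ) : ℝ :=
  A ^ 2 * (-4 * A / 5 * p ^ 5 - 4 * β * p ^ 3 * q + 8 * A / 3 * β * p ^ 4 * q
      + 4 * ε * p ^ 3 * m)
    + ε ^ 2 * β * q ^ 2 - 2 * A / 3 * β * ε ^ 2 * p * q ^ 2

/-- The production of `A² f⁴ + ε² f'²` modulo the derivative of `quarticFlux`, as a function of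
`p = f`, `m = f'`, `q = f''`. -/
noncomputable def quarticProduction (A β ε p m q : ℝ) : ℝ :=
  A ^ 2 * (-12 * ε * p ^ 2 * m ^ 2 + 12 * β * p ^ 2 * m * q - 28 / 3 * A * β * p ^ 3 * m * q)
    + 2 * A * ε ^ 2 * p * m * q - 2 * ε ^ 3 * q ^ 2

section SpatialIdentities

variable {f : ℝ → ℝ} (hf : ContDiff ℝ 3 f) (A β ε : ℝ)
include hf

theorem contDiff_two_deriv : ContDiff ℝ 2 (deriv f) := hf.deriv' (n := 2)

theorem contDiff_one_deriv_deriv : ContDiff ℝ 1 (deriv (deriv f)) :=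
  (contDiff_two_deriv hf).deriv' (n := 1)

theorem hasDerivAt_successive_derivs (x : ℝ) :
    HasDerivAt f (deriv f x) x ∧ HasDerivAt (deriv f) (deriv (deriv f) x) x ∧
      HasDerivAt (deriv (deriv f)) (deriv (deriv (deriv f)) x) x :=
  ⟨(hf.differentiable three_ne_zero x).hasDerivAt,
    ((contDiff_two_deriv hf).differentiable two_ne_zero x).hasDerivAt,
    ((contDiff_one_deriv_deriv hf).differentiable one_ne_zero x).hasDerivAt⟩

theorem ksOperator_eq (x : ℝ) :
    ksOperator A β ε f x = -A * f x * deriv f x - β * deriv (deriv (deriv f)) x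
      + A / 3 * β * deriv f x * deriv (deriv f) x
      + 2 * A / 3 * β * f x * deriv (deriv (deriv f)) x + ε * deriv (deriv f) x := by
  obtain ⟨h0, _, h2⟩ := hasDerivAt_successive_derivs hf x
  rw [ksOperator, (h0.fun_mul h2).deriv]
  ring

theorem continuous_ksOperator : Continuous (ksOperator A β ε f) := by
  have h0 := hf.continuous
  have h1 := (contDiff_two_deriv hf).continuous
  have h2 := (contDiff_one_deriv_deriv hf).continuous
  have h3 := (contDiff_one_deriv_deriv hf).continuous_deriv_one
  rw [funext (ksOperator_eq hf A β ε)]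
  fun_prop

theorem hasDerivAt_energyFlux (x : ℝ) :
    HasDerivAt (fun y ↦ energyFlux A β ε (f y) (deriv f y) (deriv (deriv f) y))
      ((f x - β * deriv (deriv f) x) * ksOperator A β ε f x
        - -ε * (deriv f x ^ 2 + β * deriv (deriv f) x ^ 2)) x := by
  obtain ⟨h0, h1, h2⟩ := hasDerivAt_successive_derivs hf x
  rw [ksOperator_eq hf]
  refine (((((((h0.pow 3).const_mul (-A / 3)).sub ((h0.const_mul β).mul h2)).add
    ((h1.pow 2).const_mul (β / 2))).add ((h0.const_mul ε).mul h1)).add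
    (((h0.pow 2).const_mul (2 * A / 3 * β)).mul h2)).add ((h2.pow 2).const_mul (β ^ 2 / 2))).sub
    ((h0.const_mul (A / 3 * β ^ 2)).mul (h2.pow 2)) |>.congr_deriv ?_
  simp only [Pi.pow_apply, Nat.add_one_sub_one]
  ring

theorem hasDerivAt_quarticFlux (x : ℝ) :
    HasDerivAt (fun y ↦ quarticFlux A β ε (f y) (deriv f y) (deriv (deriv f) y))
      ((4 * A ^ 2 * f x ^ 3 - 2 * ε ^ 2 * deriv (deriv f) x) * ksOperator A β ε f x
        - quarticProduction A β ε (f x) (deriv f x) (deriv (deriv f) x)) x := by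
  obtain ⟨h0, h1, h2⟩ := hasDerivAt_successive_derivs hf x
  rw [ksOperator_eq hf, quarticProduction]
  refine (((((((h0.pow 5).const_mul (-4 * A / 5)).sub (((h0.pow 3).const_mul (4 * β)).mul h2)).add
    (((h0.pow 4).const_mul (8 * A / 3 * β)).mul h2)).add
    (((h0.pow 3).const_mul (4 * ε)).mul h1)).const_mul (A ^ 2)).add
    ((h2.pow 2).const_mul (ε ^ 2 * β))).sub
    ((h0.const_mul (2 * A / 3 * β * ε ^ 2)).mul (h2.pow 2)) |>.congr_deriv ?_
  simp only [Pi.pow_apply, Nat.add_one_sub_one]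
  ring

end SpatialIdentities

section IntegralIdentities

theorem integral_eq_integral_of_hasDerivAt_sub {E : Type*} [NormedAddCommGroup E]
    [NormedSpace ℝ E] {f g G : ℝ → E} (hderiv : ∀ x, HasDerivAt G (f x - g x) x)
    (hf : Integrable f) (hg : Integrable g) (hG : Integrable G) : ∫ x, f x = ∫ x, g x := by
  rw [← sub_eq_zero, ← integral_sub hf hg]
  exact integral_eq_zero_of_hasDerivAt_of_integrable hderiv (hf.sub hg) hG

theorem integrable_comp_derivs {f : ℝ → ℝ} (hf : ContDiff ℝ 2 f) (hsupp : HasCompactSupport f)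
    (Q : ℝ → ℝ → ℝ → ℝ) (hQ : Continuous fun p : ℝ × ℝ × ℝ ↦ Q p.1 p.2.1 p.2.2)
    (hQ0 : Q 0 0 0 = 0) : Integrable fun x ↦ Q (f x) (deriv f x) (deriv (deriv f) x) := by
  have hzero {g : ℝ → ℝ} (hg : ∀ x ∉ tsupport f, g x = 0) (x : ℝ) (hx : x ∉ tsupport f) :
      deriv g x = 0 := deriv_eq_zero_of_notMem_of_isClosed (isClosed_tsupport f) hg hx
  have h0 (x : ℝ) (hx : x ∉ tsupport f) : f x = 0 := image_eq_zero_of_notMem_tsupport hx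
  have hf' : ContDiff ℝ 1 (deriv f) := hf.deriv' (n := 1)
  refine (hQ.comp (hf.continuous.prodMk (hf'.continuous.prodMk
    hf'.continuous_deriv_one))).integrable_of_hasCompactSupport (.intro hsupp fun x hx ↦ ?_)
  simp [h0 x hx, hzero h0 x hx, hzero (hzero h0) x hx, hQ0]

variable {f : ℝ → ℝ} (hf : ContDiff ℝ 3 f) (hsupp : HasCompactSupport f)
include hf hsupp

theorem integral_energy_mul_ksOperator (A β ε : ℝ) :
    ∫ x, (f x - β * deriv (deriv f) x) * ksOperator A β ε f x =
      -ε * ((∫ x, deriv f x ^ 2) + β * ∫ x, deriv (deriv f) x ^ 2) := by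
  have hmult : Continuous fun x ↦ f x - β * deriv (deriv f) x :=
    hf.continuous.sub ((contDiff_one_deriv_deriv hf).continuous.const_mul β)
  have hmult_supp : HasCompactSupport fun x ↦ f x - β * deriv (deriv f) x :=
    hsupp.sub hsupp.deriv.deriv.mul_left
  have hf2 : ContDiff ℝ 2 f := hf.of_le (by norm_num)
  have hm : Integrable fun x ↦ deriv f x ^ 2 :=
    integrable_comp_derivs hf2 hsupp (fun _ m _ ↦ m ^ 2) (by fun_prop) (by simp)
  have hq : Integrable fun x ↦ deriv (deriv f) x ^ 2 :=
    integrable_comp_derivs hf2 hsupp (fun _ _ q ↦ q ^ 2) (by fun_prop) (by simp)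
  rw [integral_eq_integral_of_hasDerivAt_sub (hasDerivAt_energyFlux hf A β ε)
    ((hmult.mul (continuous_ksOperator hf A β ε)).integrable_of_hasCompactSupport
      hmult_supp.mul_right)
    ((hm.add (hq.const_mul β)).const_mul (-ε))
    (integrable_comp_derivs hf2 hsupp _ (by unfold energyFlux; fun_prop) (by simp [energyFlux])),
    integral_const_mul, integral_add hm (hq.const_mul β), integral_const_mul]

theorem integral_quartic_mul_ksOperator (A β ε : ℝ) :
    ∫ x, (4 * A ^ 2 * f x ^ 3 - 2 * ε ^ 2 * deriv (deriv f) x) * ksOperator A β ε f x =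
      ∫ x, quarticProduction A β ε (f x) (deriv f x) (deriv (deriv f) x) := by
  have hmult : Continuous fun x ↦ 4 * A ^ 2 * f x ^ 3 - 2 * ε ^ 2 * deriv (deriv f) x :=
    ((hf.continuous.pow 3).const_mul _).sub
      ((contDiff_one_deriv_deriv hf).continuous.const_mul _)
  have hmult_supp :
      HasCompactSupport fun x ↦ 4 * A ^ 2 * f x ^ 3 - 2 * ε ^ 2 * deriv (deriv f) x :=
    (hsupp.comp_left (g := fun p ↦ 4 * A ^ 2 * p ^ 3) (by simp)).sub
      hsupp.deriv.deriv.mul_left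
  have hf2 : ContDiff ℝ 2 f := hf.of_le (by norm_num)
  exact integral_eq_integral_of_hasDerivAt_sub (hasDerivAt_quarticFlux hf A β ε)
    ((hmult.mul (continuous_ksOperator hf A β ε)).integrable_of_hasCompactSupport
      hmult_supp.mul_right)
    (integrable_comp_derivs hf2 hsupp _ (by unfold quarticProduction; fun_prop)
      (by simp [quarticProduction]))
    (integrable_comp_derivs hf2 hsupp _ (by unfold quarticFlux; fun_prop) (by simp [quarticFlux]))

end IntegralIdentities

section QuarticBound

variable {A β ε k p m q Y : ℝ}

theorem dispersive_cubic_production_le (hε : 0 < ε) (hβ : 0 ≤ β)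
    (hp : A ^ 2 * β ^ 2 * p ^ 4 ≤ k ^ 3 * ε ^ 4) :
    12 * A ^ 2 * β * p ^ 2 * m * q ≤
      A ^ 2 * ε * p ^ 2 * m ^ 2 + 18 * (A ^ 2 + k ^ 3) * (β * ε) * q ^ 2 := by
  have coeff : 2 * A ^ 2 * β * p ^ 2 ≤ (A ^ 2 + k ^ 3) * ε ^ 2 := by
    refine le_of_mul_le_mul_left ?_ (by positivity : 0 < ε ^ 2)
    linarith [mul_nonneg (sq_nonneg A) (sq_nonneg (ε ^ 2 - β * p ^ 2))]
  have young := mul_nonneg (sq_nonneg (A * p)) (sq_nonneg (ε * m - 6 * β * q))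
  have := mul_le_mul_of_nonneg_right coeff (by positivity : 0 ≤ 18 * β * q ^ 2)
  refine le_of_mul_le_mul_left ?_ hε
  linarith

theorem dispersive_quartic_production_le (hε : 0 < ε) (hβ : 0 ≤ β)
    (hp : A ^ 2 * β * p ^ 4 ≤ k * ε ^ 4 * Y) :
    -(28 / 3) * A ^ 3 * β * p ^ 3 * m * q ≤
      A ^ 2 * ε * p ^ 2 * m ^ 2 + 22 * A ^ 2 * k * (ε ^ 2 * Y) * (β * ε) * q ^ 2 := by
  have young := mul_nonneg (sq_nonneg (A * p)) (sq_nonneg (ε * m + 14 / 3 * A * β * p * q))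
  have := mul_le_mul_of_nonneg_right hp (by positivity : 0 ≤ 22 * A ^ 2 * β * q ^ 2)
  have : 0 ≤ A ^ 4 * β ^ 2 * p ^ 4 * q ^ 2 := by positivity
  refine le_of_mul_le_mul_left ?_ hε
  linarith

theorem quarticProduction_le (hε : 0 < ε) (hβ : 0 ≤ β) (hk : 0 ≤ k)
    (hβk : β * (k * A ^ 2) ≤ ε ^ 4) (hY0 : 0 ≤ Y) (hY : β * Y ≤ k ^ 2)
    (hp : p ^ 4 ≤ k ^ 2 * Y) :
    quarticProduction A β ε p m q ≤
      (-ε ^ 3 + (18 * (A ^ 2 + k ^ 3) + 22 * A ^ 2 * k * (ε ^ 2 * Y)) * (β * ε)) * q ^ 2 := by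
  have hp_quartic : A ^ 2 * β * p ^ 4 ≤ k * ε ^ 4 * Y := calc
    A ^ 2 * β * p ^ 4 ≤ A ^ 2 * β * (k ^ 2 * Y) := by gcongr
    _ = k * (β * (k * A ^ 2)) * Y := by ring
    _ ≤ k * ε ^ 4 * Y := by gcongr
  have hp_cubic : A ^ 2 * β ^ 2 * p ^ 4 ≤ k ^ 3 * ε ^ 4 := calc
    A ^ 2 * β ^ 2 * p ^ 4 = β * (A ^ 2 * β * p ^ 4) := by ring
    _ ≤ β * (k * ε ^ 4 * Y) := by gcongr
    _ = k * ε ^ 4 * (β * Y) := by ring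
    _ ≤ k * ε ^ 4 * k ^ 2 := by gcongr
    _ = k ^ 3 * ε ^ 4 := by ring
  have cubic := dispersive_cubic_production_le (m := m) (q := q) hε hβ hp_cubic
  have quartic := dispersive_quartic_production_le (m := m) (q := q) hε hβ hp_quartic
  have convective : 2 * A * ε ^ 2 * p * m * q ≤ ε ^ 3 * q ^ 2 + A ^ 2 * ε * p ^ 2 * m ^ 2 := by
    linarith [mul_nonneg hε.le (sq_nonneg (ε * q - A * p * m))]
  have : 0 ≤ A ^ 2 * ε * p ^ 2 * m ^ 2 := by positivity
  rw [quarticProduction]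
  linarith

theorem integral_quartic_mul_ksOperator_le {f : ℝ → ℝ} (hf : ContDiff ℝ 3 f)
    (hsupp : HasCompactSupport f) (hε : 0 < ε) (hβ : 0 ≤ β) (hk : 0 ≤ k)
    (hβk : β * (k * A ^ 2) ≤ ε ^ 4) (hf0 : ∫ x, f x ^ 2 ≤ k ^ 2)
    (hf1 : β * ∫ x, deriv f x ^ 2 ≤ k ^ 2) :
    ∫ x, (4 * A ^ 2 * f x ^ 3 - 2 * ε ^ 2 * deriv (deriv f) x) * ksOperator A β ε f x ≤
      (-ε ^ 3 + (18 * (A ^ 2 + k ^ 3) + 22 * A ^ 2 * k * (ε ^ 2 * ∫ x, deriv f x ^ 2)) * (β * ε))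
        * ∫ x, deriv (deriv f) x ^ 2 := by
  have hf2 : ContDiff ℝ 2 f := hf.of_le (by norm_num)
  have hY0 : 0 ≤ ∫ x, deriv f x ^ 2 := integral_nonneg fun x ↦ sq_nonneg _
  rw [integral_quartic_mul_ksOperator hf hsupp, ← integral_const_mul]
  refine integral_mono
    (integrable_comp_derivs hf2 hsupp _ (by unfold quarticProduction; fun_prop)
      (by simp [quarticProduction]))
    (integrable_comp_derivs hf2 hsupp (fun _ _ q ↦ _ * q ^ 2) (by fun_prop) (by simp)) fun x ↦ ?_
  exact quarticProduction_le hε hβ hk hβk hY0 hf1 <|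
    (pow_four_le_integral_sq_mul_integral_deriv_sq (hf.of_le (by norm_num)) hsupp x).trans
      (by gcongr)

end QuarticBound

theorem integral_le_exp_mul_of_deriv_add_le {E E' F F' g : ℝ → ℝ} {a b : ℝ} (ha : 0 ≤ a)
    (hb : 0 ≤ b) (hE : ∀ t ≥ 0, HasDerivAt E (E' t) t) (hF : ∀ t ≥ 0, HasDerivAt F (F' t) t)
    (hE0 : ∀ t ≥ 0, 0 ≤ E t) (hF0 : ∀ t ≥ 0, 0 ≤ F t) (hE' : ∀ t ≥ 0, E' t ≤ 0)
    (hg : Continuous g) (hg0 : ∀ t ≥ 0, 0 ≤ g t)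
    (h : ∀ t ≥ 0, F' t + g t ≤ (a + b * F t) * -E' t) {t : ℝ} (ht : 0 ≤ t) :
    ∫ s in 0..t, g s ≤ Real.exp (b * E 0) * (F 0 + a * E 0) := by
  set Φ : ℝ → ℝ := fun s ↦ Real.exp (b * E s) * (F s + a * E s)
  have hΦ (s : ℝ) (hs : 0 ≤ s) : HasDerivAt Φ
      (Real.exp (b * E s) * (F' s + a * E' s + b * E' s * (F s + a * E s))) s :=
    (((hE s hs).const_mul b).exp.mul ((hF s hs).fun_add ((hE s hs).const_mul a))).congr_deriv
      (by ring)
  have hΦ' (s : ℝ) (hs : 0 ≤ s) :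
      Real.exp (b * E s) * (F' s + a * E' s + b * E' s * (F s + a * E s)) ≤ -g s := by
    have bracket : F' s + a * E' s + b * E' s * (F s + a * E s) ≤ -g s := by
      have : 0 ≤ b * a * E s * -E' s :=
        mul_nonneg (mul_nonneg (by positivity) (hE0 s hs)) (neg_nonneg.2 (hE' s hs))
      linarith [h s hs]
    have one_le : 1 ≤ Real.exp (b * E s) := Real.one_le_exp (mul_nonneg hb (hE0 s hs))
    calc _ ≤ Real.exp (b * E s) * -g s := by gcongr
      _ ≤ 1 * -g s := mul_le_mul_of_nonpos_right one_le (neg_nonpos.2 (hg0 s hs))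
      _ = -g s := one_mul _
  have key : ∫ s in 0..t, g s ≤ -Φ t - -Φ 0 :=
    intervalIntegral.integral_le_sub_of_hasDeriv_right_of_le ht
      (fun s hs ↦ (hΦ s hs.1).continuousAt.neg.continuousWithinAt)
      (fun s hs ↦ (hΦ s hs.1.le).neg.hasDerivWithinAt) hg.integrableOn_Icc
      (fun s hs ↦ le_neg_of_le_neg (hΦ' s hs.1.le))
  have hΦt : 0 ≤ Φ t := mul_nonneg (Real.exp_pos _).le
    (add_nonneg (hF0 t ht) (mul_nonneg ha (hE0 t ht)))
  linarith

section TimeDerivative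

variable {u : ℝ → ℝ → ℝ} {K : Set ℝ}

theorem hasDerivAt_integral_pow (hu : ContDiff ℝ 1 (uncurry u)) (hK : IsCompact K)
    (hsupp : ∀ t, ∀ x ∉ K, u t x = 0) {n : ℕ} (hn : n ≠ 0) (t : ℝ) :
    HasDerivAt (fun τ ↦ ∫ x, u τ x ^ n) (∫ x, n * u t x ^ (n - 1) * deriv (u · x) t) t := by
  have hu' : Continuous (uncurry fun t x ↦ deriv (u · x) t) :=
    (contDiff_uncurry_deriv_left (m := 0) hu (by norm_num)).continuous
  refine hasDerivAt_integral_of_support_subset_compact (F := fun τ x ↦ u τ x ^ n)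
    (F' := fun τ x ↦ n * u τ x ^ (n - 1) * deriv (u · x) τ) hK
    (fun τ ↦ (hu.continuous.uncurry_left τ).pow n)
    ((continuous_const.mul (hu.continuous.pow (n - 1))).mul hu')
    (fun τ x hx ↦ by simp [hsupp τ x hx, hn]) (fun τ x ↦ ?_) t
  exact (hasDerivAt_curry_left
    (hu.differentiable one_ne_zero (τ, x))).differentiableAt.hasDerivAt.fun_pow n

theorem hasDerivAt_integral_deriv_sq (hu : ContDiff ℝ 2 (uncurry u)) (hK : IsCompact K)
    (hsupp : ∀ t, ∀ x ∉ K, u t x = 0) (t : ℝ) :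
    HasDerivAt (fun τ ↦ ∫ x, deriv (u τ) x ^ 2)
      (-2 * ∫ x, deriv (deriv (u t)) x * deriv (u · x) t) t := by
  have hsupp' (τ : ℝ) (x : ℝ) (hx : x ∉ K) : deriv (u τ) x = 0 :=
    deriv_eq_zero_of_notMem_of_isClosed hK.isClosed (hsupp τ) hx
  have hux : ContDiff ℝ 1 (uncurry fun τ ↦ deriv (u τ)) :=
    contDiff_uncurry_deriv_right hu (by norm_num)
  have hut : ContDiff ℝ 1 (uncurry fun τ x ↦ deriv (u · x) τ) :=
    contDiff_uncurry_deriv_left hu (by norm_num)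
  have hux_t : ContDiff ℝ 1 (deriv (u t)) := hux.comp (contDiff_const.prodMk contDiff_id)
  have hut_t : ContDiff ℝ 1 fun x ↦ deriv (u · x) t :=
    hut.comp (contDiff_const.prodMk contDiff_id)
  have hcompact : HasCompactSupport (deriv (u t)) := .intro hK (hsupp' t)
  refine (hasDerivAt_integral_pow hux hK hsupp' two_ne_zero t).congr_deriv ?_
  have by_parts := integral_mul_deriv_eq_deriv_mul_of_integrable
    (fun x _ ↦ (hux_t.differentiable one_ne_zero x).hasDerivAt)
    (fun x _ ↦ (hut_t.differentiable one_ne_zero x).hasDerivAt)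
    ((hux_t.continuous.mul hut_t.continuous_deriv_one).integrable_of_hasCompactSupport
      hcompact.mul_right)
    ((hux_t.continuous_deriv_one.mul hut_t.continuous).integrable_of_hasCompactSupport
      hcompact.deriv.mul_right)
    ((hux_t.continuous.mul hut_t.continuous).integrable_of_hasCompactSupport hcompact.mul_right)
  rw [neg_mul, ← mul_neg, ← by_parts, ← integral_const_mul]
  exact integral_congr_ae (.of_forall fun x ↦ by simp [deriv_deriv_comm hu t x, mul_assoc])

end TimeDerivative

/-- The energy `‖f‖²_{L²} + β ‖f'‖²_{L²}`, which the dispersive terms conserve. -/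
noncomputable def ksEnergy (β : ℝ) (f : ℝ → ℝ) : ℝ :=
  (∫ x, f x ^ 2) + β * ∫ x, deriv f x ^ 2

/-- The functional `A² ‖f‖⁴_{L⁴} + ε² ‖f'‖²_{L²}` controlling `∂ₓ²u` in `L²` of space-time. -/
noncomputable def quarticEnergy (A ε : ℝ) (f : ℝ → ℝ) : ℝ :=
  A ^ 2 * (∫ x, f x ^ 4) + ε ^ 2 * ∫ x, deriv f x ^ 2

theorem ksEnergy_nonneg {β : ℝ} (hβ : 0 ≤ β) (f : ℝ → ℝ) : 0 ≤ ksEnergy β f := by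
  unfold ksEnergy
  positivity

theorem quarticEnergy_nonneg (A ε : ℝ) (f : ℝ → ℝ) : 0 ≤ quarticEnergy A ε f := by
  unfold quarticEnergy
  positivity

theorem integral_quartic_mul_ksOperator_add_dissipation_le {A β ε k : ℝ} {f : ℝ → ℝ}
    (hf : ContDiff ℝ 3 f) (hsupp : HasCompactSupport f) (hε : 0 < ε) (hβ : 0 ≤ β) (hk : 0 ≤ k)
    (hβk : β * (k * A ^ 2) ≤ ε ^ 4) (hE : ksEnergy β f ≤ k ^ 2) :
    (∫ x, (4 * A ^ 2 * f x ^ 3 - 2 * ε ^ 2 * deriv (deriv f) x) * ksOperator A β ε f x)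
        + (ε * (∫ x, deriv f x ^ 2) + ε ^ 3 * ∫ x, deriv (deriv f) x ^ 2) ≤
      (9 * (A ^ 2 + k ^ 3) + 1 / 2 + 11 * A ^ 2 * k * quarticEnergy A ε f) *
        (2 * ε * ((∫ x, deriv f x ^ 2) + β * ∫ x, deriv (deriv f) x ^ 2)) := by
  rw [ksEnergy] at hE
  set y := ∫ x, deriv f x ^ 2
  set z := ∫ x, deriv (deriv f) x ^ 2
  have hf0 : 0 ≤ ∫ x, f x ^ 2 := by positivity
  have hy : 0 ≤ y := by positivity
  have hz : 0 ≤ z := by positivity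
  have hβy : 0 ≤ β * y := mul_nonneg hβ hy
  have production :=
    integral_quartic_mul_ksOperator_le hf hsupp hε hβ hk hβk (by linarith) (by linarith)
  have quartic_ge : ε ^ 2 * y ≤ quarticEnergy A ε f := le_add_of_nonneg_left (by positivity)
  have weight : 11 * A ^ 2 * k * (ε ^ 2 * y) * (2 * ε * (y + β * z)) ≤
      11 * A ^ 2 * k * quarticEnergy A ε f * (2 * ε * (y + β * z)) := by gcongr
  have : 0 ≤ (18 * (A ^ 2 + k ^ 3) + 22 * A ^ 2 * k * (ε ^ 2 * y)) * (ε * y) := by positivity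
  have : 0 ≤ ε * (β * z) := by positivity
  linarith

section InitialData

variable {β ε C : ℝ} {f : ℝ → ℝ}
  (hf : (∫ x, f x ^ 2) + (∫ x, f x ^ 4) + (β + ε ^ 2) * (∫ x, deriv f x ^ 2) ≤ C)
include hf

theorem ksEnergy_le_of_add_le : ksEnergy β f ≤ C := by
  have : 0 ≤ (∫ x, f x ^ 4) + ε ^ 2 * ∫ x, deriv f x ^ 2 := by positivity
  rw [ksEnergy]
  linarith

theorem quarticEnergy_le_of_add_le (hβ : 0 ≤ β) (A : ℝ) :
    quarticEnergy A ε f ≤ (A ^ 2 + 1) * C := by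
  have energy_nonneg := ksEnergy_nonneg hβ f
  have quartic_nonneg : 0 ≤ ∫ x, f x ^ 4 := by positivity
  have deriv_nonneg : 0 ≤ ε ^ 2 * ∫ x, deriv f x ^ 2 := by positivity
  rw [ksEnergy] at energy_nonneg
  calc quarticEnergy A ε f ≤ A ^ 2 * C + C := by
        unfold quarticEnergy
        gcongr <;> linarith
    _ = (A ^ 2 + 1) * C := by ring

end InitialData

/-- Classical solutions of the Kudryashov–Sinelshchikov equation on `[0, ∞) × ℝ` whose support in
space is uniformly compact. The function `u` is given on the whole plane, so that `deriv (u · x) 0`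
is a genuine two-sided derivative. -/
structure IsKSSolution (A β ε : ℝ) (u : ℝ → ℝ → ℝ) : Prop where
  contDiff : ContDiff ℝ 3 (uncurry u)
  exists_isCompact : ∃ K, IsCompact K ∧ ∀ t, ∀ x ∉ K, u t x = 0
  deriv_eq : ∀ t ≥ 0, ∀ x, deriv (u · x) t = ksOperator A β ε (u t) x

namespace IsKSSolution

variable {A β ε : ℝ} {u : ℝ → ℝ → ℝ} (hu : IsKSSolution A β ε u)
include hu

theorem contDiff_slice (t : ℝ) : ContDiff ℝ 3 (u t) :=
  hu.contDiff.comp (contDiff_const.prodMk contDiff_id)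

theorem hasCompactSupport_slice (t : ℝ) : HasCompactSupport (u t) :=
  let ⟨_, hK, hsupp⟩ := hu.exists_isCompact
  .intro hK (hsupp t)

theorem continuous_integral_deriv_sq :
    Continuous (fun t ↦ ∫ x, deriv (u t) x ^ 2) ∧
      Continuous (fun t ↦ ∫ x, deriv (deriv (u t)) x ^ 2) := by
  obtain ⟨K, hK, hsupp⟩ := hu.exists_isCompact
  have hsupp' (t x : ℝ) (hx : x ∉ K) : deriv (u t) x = 0 :=
    deriv_eq_zero_of_notMem_of_isClosed hK.isClosed (hsupp t) hx
  have hsupp'' (t x : ℝ) (hx : x ∉ K) : deriv (deriv (u t)) x = 0 :=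
    deriv_eq_zero_of_notMem_of_isClosed hK.isClosed (hsupp' t) hx
  have hux : ContDiff ℝ 2 (uncurry fun t ↦ deriv (u t)) :=
    contDiff_uncurry_deriv_right hu.contDiff (by norm_num)
  have huxx : ContDiff ℝ 1 (uncurry fun t ↦ deriv (deriv (u t))) :=
    contDiff_uncurry_deriv_right hux (by norm_num)
  exact ⟨continuous_iff_continuousAt.2 fun t ↦ (hasDerivAt_integral_pow
      (hux.of_le (by norm_num)) hK hsupp' two_ne_zero t).continuousAt,
    continuous_iff_continuousAt.2 fun t ↦ (hasDerivAt_integral_pow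
      huxx hK hsupp'' two_ne_zero t).continuousAt⟩

theorem integrable_mul_ksOperator {g : ℝ → ℝ} (hg : Continuous g) (hg' : HasCompactSupport g)
    (t : ℝ) : Integrable fun x ↦ g x * ksOperator A β ε (u t) x :=
  (hg.mul (continuous_ksOperator (hu.contDiff_slice t) A β ε)).integrable_of_hasCompactSupport
    hg'.mul_right

theorem hasDerivAt_integral_pow_add_integral_deriv_sq (a b : ℝ) {n : ℕ} (hn : n ≠ 0) {t : ℝ}
    (ht : 0 ≤ t) :
    HasDerivAt (fun τ ↦ a * (∫ x, u τ x ^ (n + 1)) + b * ∫ x, deriv (u τ) x ^ 2)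
      (∫ x, ((n + 1) * a * u t x ^ n - 2 * b * deriv (deriv (u t)) x)
        * ksOperator A β ε (u t) x) t := by
  obtain ⟨K, hK, hsupp⟩ := hu.exists_isCompact
  have hcontDiff := hu.contDiff_slice t
  have hcompact := hu.hasCompactSupport_slice t
  have hpow : Integrable fun x ↦ u t x ^ n * ksOperator A β ε (u t) x :=
    hu.integrable_mul_ksOperator (hcontDiff.continuous.pow n)
      (hcompact.comp_left (g := (· ^ n)) (zero_pow hn)) t
  have hderiv : Integrable fun x ↦ deriv (deriv (u t)) x * ksOperator A β ε (u t) x :=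
    hu.integrable_mul_ksOperator (contDiff_one_deriv_deriv hcontDiff).continuous
      hcompact.deriv.deriv t
  refine (((hasDerivAt_integral_pow (hu.contDiff.of_le (by norm_num)) hK hsupp n.succ_ne_zero
    t).const_mul a).add ((hasDerivAt_integral_deriv_sq (hu.contDiff.of_le (by norm_num)) hK hsupp
    t).const_mul b)).congr_deriv ?_
  simp only [hu.deriv_eq t ht, sub_mul, mul_assoc, Nat.add_one_sub_one, Nat.cast_add_one]
  rw [integral_sub (by simpa [mul_assoc] using (hpow.const_mul a).const_mul (n + 1 : ℝ))
    ((hderiv.const_mul b).const_mul 2)]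
  simp only [integral_const_mul]
  ring

theorem hasDerivAt_ksEnergy {t : ℝ} (ht : 0 ≤ t) :
    HasDerivAt (fun τ ↦ ksEnergy β (u τ))
      (-2 * ε * ((∫ x, deriv (u t) x ^ 2) + β * ∫ x, deriv (deriv (u t)) x ^ 2)) t := by
  have h := hu.hasDerivAt_integral_pow_add_integral_deriv_sq 1 β one_ne_zero ht
  have energy := integral_energy_mul_ksOperator (hu.contDiff_slice t)
    (hu.hasCompactSupport_slice t) A β ε
  simp only [one_mul] at h
  refine h.congr_deriv ?_
  rw [show -2 * ε * ((∫ x, deriv (u t) x ^ 2) + β * ∫ x, deriv (deriv (u t)) x ^ 2) =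
    2 * (-ε * ((∫ x, deriv (u t) x ^ 2) + β * ∫ x, deriv (deriv (u t)) x ^ 2)) by ring,
    ← energy, ← integral_const_mul]
  congr! 2
  push_cast
  ring

theorem hasDerivAt_quarticEnergy {t : ℝ} (ht : 0 ≤ t) :
    HasDerivAt (fun τ ↦ quarticEnergy A ε (u τ))
      (∫ x, (4 * A ^ 2 * u t x ^ 3 - 2 * ε ^ 2 * deriv (deriv (u t)) x)
        * ksOperator A β ε (u t) x) t := by
  have h := hu.hasDerivAt_integral_pow_add_integral_deriv_sq (A ^ 2) (ε ^ 2) three_ne_zero ht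
  norm_num at h
  exact h

theorem ksEnergy_le (hε : 0 ≤ ε) (hβ : 0 ≤ β) {t : ℝ} (ht : 0 ≤ t) :
    ksEnergy β (u t) ≤ ksEnergy β (u 0) := by
  refine antitoneOn_of_deriv_nonpos (f := fun τ ↦ ksEnergy β (u τ)) (convex_Ici 0)
    (fun s hs ↦ (hu.hasDerivAt_ksEnergy hs).continuousAt.continuousWithinAt)
    (fun s hs ↦ ?_) (fun s hs ↦ ?_) self_mem_Ici ht ht
  all_goals rw [interior_Ici] at hs
  · exact (hu.hasDerivAt_ksEnergy (le_of_lt hs)).differentiableAt.differentiableWithinAt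
  · rw [(hu.hasDerivAt_ksEnergy (le_of_lt hs)).deriv, neg_mul, neg_mul, neg_nonpos]
    positivity

theorem integral_dissipation_le (hε : 0 < ε) (hβ : 0 ≤ β) {k : ℝ} (hk : 0 ≤ k)
    (hβk : β * (k * A ^ 2) ≤ ε ^ 4) (hE : ksEnergy β (u 0) ≤ k ^ 2) {t : ℝ} (ht : 0 ≤ t) :
    ∫ s in 0..t, (ε * (∫ x, deriv (u s) x ^ 2) + ε ^ 3 * ∫ x, deriv (deriv (u s)) x ^ 2) ≤
      Real.exp (11 * A ^ 2 * k * ksEnergy β (u 0)) *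
        (quarticEnergy A ε (u 0) + (9 * (A ^ 2 + k ^ 3) + 1 / 2) * ksEnergy β (u 0)) := by
  obtain ⟨hy, hz⟩ := hu.continuous_integral_deriv_sq
  refine integral_le_exp_mul_of_deriv_add_le (by positivity) (by positivity)
    (fun s hs ↦ hu.hasDerivAt_ksEnergy hs) (fun s hs ↦ hu.hasDerivAt_quarticEnergy hs)
    (fun s _ ↦ ksEnergy_nonneg hβ (u s)) (fun s _ ↦ quarticEnergy_nonneg A ε (u s))
    (fun s _ ↦ ?_) (by fun_prop) (fun s _ ↦ by positivity) (fun s hs ↦ ?_) ht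
  · rw [neg_mul, neg_mul, neg_nonpos]
    positivity
  · have h := integral_quartic_mul_ksOperator_add_dissipation_le (hu.contDiff_slice s)
      (hu.hasCompactSupport_slice s) hε hβ hk hβk ((hu.ksEnergy_le hε.le hβ hs).trans hE)
    rwa [neg_mul, neg_mul, neg_neg]

theorem two_mul_integral_abs_mul_abs_le (hε : 0 < ε) (s : ℝ) :
    2 * ε ^ 2 * (∫ x, |deriv (u s) x| * |deriv (deriv (u s)) x|) ≤
      ε * (∫ x, deriv (u s) x ^ 2) + ε ^ 3 * ∫ x, deriv (deriv (u s)) x ^ 2 := by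
  have hf : ContDiff ℝ 2 (u s) := (hu.contDiff_slice s).of_le (by norm_num)
  have hsupp := hu.hasCompactSupport_slice s
  have hm : Integrable fun x ↦ ε * deriv (u s) x ^ 2 :=
    integrable_comp_derivs hf hsupp (fun _ m _ ↦ ε * m ^ 2) (by fun_prop) (by simp)
  have hq : Integrable fun x ↦ ε ^ 3 * deriv (deriv (u s)) x ^ 2 :=
    integrable_comp_derivs hf hsupp (fun _ _ q ↦ ε ^ 3 * q ^ 2) (by fun_prop) (by simp)
  simp only [← integral_const_mul]
  rw [← integral_add hm hq]
  refine integral_mono_of_nonneg (.of_forall fun x ↦ by positivity) (hm.add hq)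
    (.of_forall fun x ↦ ?_)
  have young := mul_nonneg hε.le (sq_nonneg (|deriv (u s) x| - ε * |deriv (deriv (u s)) x|))
  simp only [sub_sq, mul_pow, sq_abs] at young
  linarith

theorem two_mul_integral_integral_abs_mul_abs_le (hε : 0 < ε) {t : ℝ} (ht : 0 ≤ t) :
    2 * ε ^ 2 * (∫ s in 0..t, ∫ x, |deriv (u s) x| * |deriv (deriv (u s)) x|) ≤
      ∫ s in 0..t, (ε * (∫ x, deriv (u s) x ^ 2) + ε ^ 3 * ∫ x, deriv (deriv (u s)) x ^ 2) := by
  obtain ⟨hy, hz⟩ := hu.continuous_integral_deriv_sq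
  rw [← intervalIntegral.integral_const_mul, intervalIntegral.integral_of_le ht,
    intervalIntegral.integral_of_le ht]
  exact integral_mono_of_nonneg (.of_forall fun s ↦ by positivity)
    ((hy.const_mul ε).add (hz.const_mul (ε ^ 3))).integrableOn_Ioc
    (.of_forall (hu.two_mul_integral_abs_mul_abs_le hε))

end IsKSSolution

theorem stmt_10_general (A C₀ : ℝ) (hA : A ≠ 0) (hC₀pos : 0 < C₀) :
    ∃ M : ℝ, 0 < M ∧ ∀ (ε β : ℝ) (u : ℝ → ℝ → ℝ), 0 < ε → 0 ≤ β → IsKSSolution A β ε u →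
      (∫ x, u 0 x ^ 2) + (∫ x, u 0 x ^ 4) + (β + ε ^ 2) * (∫ x, deriv (u 0) x ^ 2) ≤ C₀ →
      β ≤ ε ^ 4 / (√C₀ * A ^ 2) →
      ∀ t ≥ 0, β * (∫ s in 0..t, ∫ x, |deriv (u s) x| * |deriv (deriv (u s)) x|) ≤ M * ε ^ 2 := by
  obtain ⟨k, hk, rfl⟩ : ∃ k : ℝ, 0 < k ∧ k ^ 2 = C₀ :=
    ⟨√C₀, Real.sqrt_pos.2 hC₀pos, Real.sq_sqrt hC₀pos.le⟩
  rw [Real.sqrt_sq hk.le]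
  set D : ℝ := Real.exp (11 * A ^ 2 * k * k ^ 2) *
    ((A ^ 2 + 1) * k ^ 2 + (9 * (A ^ 2 + k ^ 3) + 1 / 2) * k ^ 2)
  refine ⟨D / (2 * (k * A ^ 2)), by positivity, fun ε β u hε hβ hu hinit hβk t ht ↦ ?_⟩
  have energy_le := ksEnergy_le_of_add_le hinit
  have quartic_le := quarticEnergy_le_of_add_le hinit hβ A
  have dissipation_le : ∫ s in 0..t,
      (ε * (∫ x, deriv (u s) x ^ 2) + ε ^ 3 * ∫ x, deriv (deriv (u s)) x ^ 2) ≤ D :=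
    (hu.integral_dissipation_le hε hβ hk.le ((le_div_iff₀ (by positivity)).1 hβk) energy_le
      ht).trans <| by
        have := ksEnergy_nonneg hβ (u 0)
        have := quarticEnergy_nonneg A ε (u 0)
        unfold D
        gcongr
  have mixed_le := (hu.two_mul_integral_integral_abs_mul_abs_le hε ht).trans dissipation_le
  have mixed_nonneg : 0 ≤ ∫ s in 0..t, ∫ x, |deriv (u s) x| * |deriv (deriv (u s)) x| :=
    intervalIntegral.integral_nonneg ht fun s _ ↦ by positivity
  calc β * (∫ s in 0..t, ∫ x, |deriv (u s) x| * |deriv (deriv (u s)) x|)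
      ≤ ε ^ 4 / (k * A ^ 2) * ∫ s in 0..t, ∫ x, |deriv (u s) x| * |deriv (deriv (u s)) x| := by
        gcongr
    _ = ε ^ 2 / (2 * (k * A ^ 2)) *
        (2 * ε ^ 2 * ∫ s in 0..t, ∫ x, |deriv (u s) x| * |deriv (deriv (u s)) x|) := by field
    _ ≤ ε ^ 2 / (2 * (k * A ^ 2)) * D := by gcongr
    _ = D / (2 * (k * A ^ 2)) * ε ^ 2 := by ring

/-- Estimate `β ∫₀ᵗ ‖∂ₓu ∂ₓ²u‖_{L¹} ds ≤ M ε²`. -/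
theorem stmt_10 (A C₀ : ℝ) (hA : A ≠ 0) (hC₀pos : 0 < C₀) :
    ∃ M : ℝ, 0 < M ∧
      ∀ (ε β : ℝ) (u : ℝ → ℝ → ℝ),
        0 < ε → 0 < β →
        ContDiff ℝ (⊤ : ℕ∞) (Function.uncurry u) →
        (∃ R > (0:ℝ), ∀ t x : ℝ, R ≤ |x| → u t x = 0) →
        (∀ t : ℝ, 0 ≤ t → ∀ x : ℝ,
          deriv (fun τ => u τ x) t
            + A * u t x * deriv (u t) x
            + β * deriv (deriv (deriv (u t))) x
            - (2 * A / 3) * β * deriv (fun y => u t y * deriv (deriv (u t)) y) x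
            - (-(A / 3)) * β * deriv (u t) x * deriv (deriv (u t)) x
            - ε * deriv (deriv (u t)) x = 0) →
        ((∫ x : ℝ, (u 0 x) ^ 2) + (∫ x : ℝ, (u 0 x) ^ 4)
            + (β + ε ^ 2) * (∫ x : ℝ, (deriv (u 0) x) ^ 2) ≤ C₀) →
        β ≤ ε ^ 4 / (Real.sqrt C₀ * A ^ 2) →
        ∀ t : ℝ, 0 ≤ t →
          β * (∫ s in (0:ℝ)..t, ∫ x : ℝ, |deriv (u s) x| * |deriv (deriv (u s)) x|) ≤ M * ε ^ 2 := by
  obtain ⟨M, hM, hbound⟩ := stmt_10_general A C₀ hA hC₀pos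
  refine ⟨M, hM, fun ε β u hε hβ hu ⟨R, _, hR⟩ hpde ↦ hbound ε β u hε hβ.le ⟨?_, ?_, ?_⟩⟩
  · exact hu.of_le (WithTop.coe_le_coe.2 le_top)
  · refine ⟨Metric.closedBall 0 R, isCompact_closedBall 0 R, fun t x hx ↦ hR t x ?_⟩
    simpa using (not_le.1 (mt Metric.mem_closedBall.2 hx)).le
  · exact fun t ht x ↦ by rw [ksOperator]; linarith [hpde t ht x]
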